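/- Let S be a d-set with n−1<d≤n and Q a cube centered in S with 0<ℓ(Q)≤R. Then for every polynomial p of degree ≤ k and all 1≤u,r≤∞: ( H^d(Q∩S)^{-1} ∫_{Q∩S} |p|^r dH^d )^{1/r} ≤ C ( H^d(Q∩S)^{-1} ∫_{Q∩S} |p|^u dH^d )^{1/u}, with C = C(S,R,n,u,r,k). -/

import Mathlib

open Metric MeasureTheory
open scoped ENNReal

/-- Functions `ℝⁿ → ℝ` given by polynomials of degree at most `k`. -/
def degLE (n k : ℕ) : Set ((Fin n → ℝ) → ℝ) :=
  {P | ∃ q : MvPolynomial (Fin n) ℝ, q.totalDegree ≤ k ∧ ∀ x, P x = MvPolynomial.eval x q}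

/-!
Everything reduces to one Remez-type inequality. Call a measure Frostman if its balls of radius
`ρ` have mass at most `A ρ ^ d`. Since `d > n - 1`, the zero set of a nonzero polynomial is
`H^d`-null, so it has a neighbourhood of mass at most `1 / 2` for all Frostman measures at once;
off that neighbourhood the polynomial is bounded below. By compactness of the unit sphere in the
finite-dimensional space of polynomials of degree at most `k`, there is `δ > 0` such that
`|p| ≥ δ sup_K |p|` on a set of mass at least `1 / 2`, for all such `p` and all Frostman measures
of mass one on `K`. The normalized measure on `Q ∩ S`, rescaled to the unit cube, is Frostman with
constants depending only on the regularity of `S` and on `R`, and Chebyshev's inequality turns the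
lower bound on `|p|` into a bound of `sup_Q |p|` by any `L ^ u` mean.
-/

open ProbabilityTheory Set Filter
open scoped Topology

section MvPolynomialDerivatives

open MvPolynomial

variable {σ R : Type*} [CommSemiring R]

theorem totalDegree_pderiv_lt {p : MvPolynomial σ R} (hp : p.totalDegree ≠ 0) (i : σ) :
    (pderiv i p).totalDegree < p.totalDegree := by
  classical
  rw [totalDegree, Finset.sup_lt_iff (Nat.pos_of_ne_zero hp)]
  intro m hm
  rw [mem_support_iff, coeff_pderiv] at hm
  have hle := le_totalDegree (mem_support_iff.mpr (left_ne_zero_of_mul hm))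
  rw [Finsupp.sum_add_index' (fun _ ↦ rfl) (fun _ _ _ ↦ rfl), Finsupp.sum_single_index rfl] at hle
  exact hle

theorem exists_pderiv_ne_zero [NoZeroDivisors R] [CharZero R] {p : MvPolynomial σ R}
    (hp : p.totalDegree ≠ 0) : ∃ i, pderiv i p ≠ 0 := by
  by_contra! hzero
  refine hp (p.totalDegree_eq_zero_iff.mpr fun m hm i ↦ ?_)
  by_contra hmi
  have hcoeff := congrArg (coeff (m - Finsupp.single i 1)) (hzero i)
  rw [coeff_pderiv, tsub_add_cancel_of_le
    (Finsupp.single_le_iff.mpr (Nat.one_le_iff_ne_zero.mpr hmi)), coeff_zero] at hcoeff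
  exact mul_ne_zero (mem_support_iff.mp hm) (Nat.cast_add_one_ne_zero _) hcoeff

theorem hasStrictFDerivAt_eval {𝕜 : Type*} [NontriviallyNormedField 𝕜] [Fintype σ]
    (p : MvPolynomial σ 𝕜) (x : σ → 𝕜) :
    HasStrictFDerivAt (fun y ↦ eval y p)
      (∑ i, eval x (pderiv i p) • (ContinuousLinearMap.proj i : (σ → 𝕜) →L[𝕜] 𝕜)) x := by
  classical
  induction p using MvPolynomial.induction_on with
  | C a =>
    simp only [eval_C]
    refine (hasStrictFDerivAt_const a x).congr_fderiv (ContinuousLinearMap.ext fun v ↦ ?_)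
    simp
  | add p q hp hq =>
    simp only [map_add]
    refine (hp.fun_add hq).congr_fderiv (ContinuousLinearMap.ext fun v ↦ ?_)
    simp [add_mul, Finset.sum_add_distrib]
  | mul_X p j hp =>
    have hX (i : σ) : eval x (pderiv i (X j : MvPolynomial σ 𝕜)) = if j = i then 1 else 0 := by
      rw [pderiv_X, Pi.single_apply, apply_ite (eval x), map_one, map_zero]
    have hj := (ContinuousLinearMap.proj j : (σ → 𝕜) →L[𝕜] 𝕜).hasStrictFDerivAt (x := x)
    simp only [map_mul, eval_X]
    refine (hp.fun_mul hj).congr_fderiv (ContinuousLinearMap.ext fun v ↦ ?_)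
    simp only [pderiv_mul, map_add, map_mul, hX, eval_X]
    simp [add_mul, Finset.sum_add_distrib, Finset.mul_sum, mul_assoc, mul_left_comm, add_comm]

end MvPolynomialDerivatives

section ZeroSets

theorem exists_mem_nhds_hausdorffMeasure_inter_fiber_eq_zero {E F : Type*}
    [NormedAddCommGroup E] [NormedSpace ℝ E] [FiniteDimensional ℝ E] [MeasurableSpace E]
    [BorelSpace E] [NormedAddCommGroup F] [NormedSpace ℝ F] [FiniteDimensional ℝ F]
    {f : E → F} {f' : E →L[ℝ] F} {x : E} {d : ℝ} (hf : HasStrictFDerivAt f f' x)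
    (hsurj : f'.range = ⊤) (hd : Module.finrank ℝ f'.ker < d) :
    ∃ N ∈ 𝓝 x, μH[d] (N ∩ f ⁻¹' {f x}) = 0 := by
  set Φ := hf.implicitFunction f f' hsurj
  set e := hf.implicitToOpenPartialHomeomorph f f' hsurj
  obtain ⟨L, s, hs, hlip⟩ := (hf.to_implicitFunction hsurj).exists_lipschitzOnWith
  have hparam : ∀ᶠ y in 𝓝 x, Φ (f y) (e y).2 = y := hf.eq_implicitFunction hsurj
  have htendsto : Tendsto (fun y ↦ (e y).2) (𝓝 x) (𝓝 0) := by
    have hcont := (e.continuousAt (hf.mem_implicitToOpenPartialHomeomorph_source hsurj)).snd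
    rwa [ContinuousAt, hf.implicitToOpenPartialHomeomorph_self hsurj] at hcont
  refine ⟨_, inter_mem hparam (htendsto hs), measure_mono_null (t := Φ (f x) '' s) ?_ ?_⟩
  · rintro y ⟨⟨hy, hys⟩, hfy⟩
    exact ⟨(e y).2, hys, by rw [← hfy]; exact hy⟩
  · have hd₀ : 0 ≤ d := (Nat.cast_nonneg _).trans hd.le
    refine nonpos_iff_eq_zero.mp ((hlip.hausdorffMeasure_image_le hd₀).trans_eq ?_)
    rw [Real.hausdorffMeasure_of_finrank_lt hd, Measure.coe_zero, Pi.zero_apply, mul_zero]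

variable {σ : Type*} [Fintype σ] {d : ℝ}

theorem exists_mem_nhds_hausdorffMeasure_inter_zeros_eq_zero (hd : (Fintype.card σ : ℝ) - 1 < d)
    {p : MvPolynomial σ ℝ} {x : σ → ℝ} {i : σ} (hx : MvPolynomial.eval x p = 0)
    (hxi : MvPolynomial.eval x (MvPolynomial.pderiv i p) ≠ 0) :
    ∃ N ∈ 𝓝 x, μH[d] (N ∩ {y | MvPolynomial.eval y p = 0}) = 0 := by
  classical
  have hderiv := hasStrictFDerivAt_eval p x
  set f' := ∑ i, MvPolynomial.eval x (MvPolynomial.pderiv i p) •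
    (ContinuousLinearMap.proj i : (σ → ℝ) →L[ℝ] ℝ)
  have hf'i : f' (Pi.single i 1) ≠ 0 := by
    simpa [f', Pi.single_apply] using hxi
  have hf' : (f' : Module.Dual ℝ (σ → ℝ)) ≠ 0 := fun h ↦ hf'i (LinearMap.congr_fun h _)
  have hker : Module.finrank ℝ f'.ker + 1 = Fintype.card σ :=
    (Module.Dual.finrank_ker_add_one_of_ne_zero hf').trans (Module.finrank_fintype_fun_eq_card ℝ)
  have hlt : (Module.finrank ℝ f'.ker : ℝ) < d := by
    rwa [← hker, Nat.cast_add_one, add_sub_cancel_right] at hd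
  have hfiber := exists_mem_nhds_hausdorffMeasure_inter_fiber_eq_zero hderiv
    (LinearMap.range_eq_top.mpr (LinearMap.surjective hf')) hlt
  rwa [hx] at hfiber

-- Off the zeros of a nonzero partial derivative, the zero set of `p` is a smooth hypersurface.
theorem hausdorffMeasure_zeros_eq_zero (hd : (Fintype.card σ : ℝ) - 1 < d) {p : MvPolynomial σ ℝ}
    (hp : p ≠ 0) : μH[d] {x : σ → ℝ | MvPolynomial.eval x p = 0} = 0 := by
  induction hm : p.totalDegree using Nat.strong_induction_on generalizing p with
  | _ m ih =>
  subst hm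
  by_cases hdeg : p.totalDegree = 0
  · rw [MvPolynomial.totalDegree_eq_zero_iff_eq_C] at hdeg
    rw [hdeg, Ne, MvPolynomial.C_eq_zero] at hp
    rw [hdeg]
    simp [hp]
  · obtain ⟨i, hi⟩ := exists_pderiv_ne_zero hdeg
    set p' := MvPolynomial.pderiv i p
    have hsingular : μH[d] {x : σ → ℝ | MvPolynomial.eval x p' = 0} = 0 :=
      ih _ (totalDegree_pderiv_lt hdeg i) hi rfl
    have hregular :
        μH[d] {x : σ → ℝ | MvPolynomial.eval x p = 0 ∧ MvPolynomial.eval x p' ≠ 0} = 0 := by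
      refine measure_null_of_locally_null _ fun x hx ↦ ?_
      obtain ⟨N, hN, hN₀⟩ := exists_mem_nhds_hausdorffMeasure_inter_zeros_eq_zero hd hx.1 hx.2
      exact ⟨_, inter_mem (mem_nhdsWithin_of_mem_nhds hN) self_mem_nhdsWithin,
        measure_mono_null (inter_subset_inter_right N fun y hy ↦ hy.1) hN₀⟩
    refine measure_mono_null (fun x hx ↦ ?_) (measure_union_null hregular hsingular)
    exact (em (MvPolynomial.eval x p' = 0)).symm.imp (fun hx' ↦ ⟨hx, hx'⟩) id

end ZeroSets

section Frostman

variable {X : Type*} [PseudoMetricSpace X] [MeasurableSpace X] {d ρ₀ : ℝ} {A : ℝ≥0∞}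

/-- The Frostman condition with exponent `d` and constant `A`, at scales up to `ρ₀`: the only
information about a measure that the Remez inequality below depends on. -/
def FrostmanGrowth (d : ℝ) (A : ℝ≥0∞) (ρ₀ : ℝ) (ν : Measure X) : Prop :=
  ∀ x ρ, 0 < ρ → ρ ≤ ρ₀ → ν (closedBall x ρ) ≤ A * ENNReal.ofReal ρ ^ d

/-- The subsets of `K` that carry at least half of the mass of every Frostman measure giving mass
one to `K`. Such measures need not be supported in `K`. -/
def frostmanLarge (d : ℝ) (A : ℝ≥0∞) (ρ₀ : ℝ) (K : Set X) : Set (Set K) :=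
  {s | ∀ ν : Measure X, FrostmanGrowth d A ρ₀ ν → ν K = 1 → 2⁻¹ ≤ ν (Subtype.val '' s)}

theorem isUpperSet_frostmanLarge {K : Set X} : IsUpperSet (frostmanLarge d A ρ₀ K) :=
  fun _ _ hst hs ν hν hνK ↦ (hs ν hν hνK).trans (measure_mono (image_mono hst))

theorem exists_isOpen_superset_measure_le_ediam_rpow (A : ℝ≥0∞) (d : ℝ) {t : Set X}
    (ht : ediam t < ENNReal.ofReal ρ₀) {η : ℝ≥0∞} (hη : η ≠ 0) :
    ∃ U, IsOpen U ∧ t ⊆ U ∧ ∀ ν : Measure X, FrostmanGrowth d A ρ₀ ν →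
      ν U ≤ A * ((⨆ _ : t.Nonempty, ediam t ^ d) + η) := by
  obtain rfl | ⟨x, hx⟩ := t.eq_empty_or_nonempty
  · exact ⟨∅, isOpen_empty, subset_rfl, fun ν _ ↦ by simp⟩
  obtain ⟨ρ, hDρ, hρρ₀, hρ⟩ : ∃ ρ, ediam t < ENNReal.ofReal ρ ∧ ρ ≤ ρ₀ ∧
      ENNReal.ofReal ρ ^ d ≤ ediam t ^ d + η := by
    set D := (ediam t).toReal
    have hD : ENNReal.ofReal D = ediam t := ENNReal.ofReal_toReal ht.ne_top
    have hDρ₀ : D < ρ₀ := (ENNReal.lt_ofReal_iff_toReal_lt ht.ne_top).mp ht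
    have hcont : Tendsto (fun ρ ↦ ENNReal.ofReal ρ ^ d) (𝓝[>] D) (𝓝 (ediam t ^ d)) := by
      rw [← hD]
      exact ((ENNReal.continuous_rpow_const.comp ENNReal.continuous_ofReal).tendsto D).mono_left
        nhdsWithin_le_nhds
    have hnear : ∀ᶠ ρ in 𝓝[>] D, ENNReal.ofReal ρ ^ d ≤ ediam t ^ d + η := by
      rcases eq_or_ne (ediam t ^ d) ∞ with htop | htop
      · simp [htop]
      · exact hcont.eventually_le_const (ENNReal.lt_add_right htop hη)
    obtain ⟨ρ, hρ, hDρ, hρρ₀⟩ := (hnear.and (Ioc_mem_nhdsGT hDρ₀)).exists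
    exact ⟨ρ, (ENNReal.lt_ofReal_iff_toReal_lt ht.ne_top).mpr hDρ, hρρ₀, hρ⟩
  refine ⟨ball x ρ, isOpen_ball, fun y hy ↦ ?_, fun ν hν ↦ ?_⟩
  · rw [mem_ball, ← edist_lt_ofReal]
    exact (edist_le_ediam_of_mem hy hx).trans_lt hDρ
  · rw [iSup_pos (p := t.Nonempty) ⟨x, hx⟩]
    have hρpos : 0 < ρ := ENNReal.ofReal_pos.mp (pos_of_gt hDρ)
    exact (measure_mono ball_subset_closedBall).trans
      ((hν x ρ hρpos hρρ₀).trans (mul_le_mul_right hρ A))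

end Frostman

section HausdorffNull

variable {X : Type*} [MetricSpace X] [MeasurableSpace X] [BorelSpace X] {d ρ₀ : ℝ} {A : ℝ≥0∞}

theorem exists_isOpen_superset_measure_le_of_hausdorffMeasure_eq_zero (hρ₀ : 0 < ρ₀) (hA : A ≠ ∞)
    {Z : Set X} (hZ : μH[d] Z = 0) {ε : ℝ≥0∞} (hε : ε ≠ 0) :
    ∃ U, IsOpen U ∧ Z ⊆ U ∧ ∀ ν : Measure X, FrostmanGrowth d A ρ₀ ν → ν U ≤ ε := by
  obtain ⟨η, hη, hAη⟩ := ENNReal.exists_nnreal_pos_mul_lt hA hε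
  have hη' : (η / 2 : ℝ≥0∞) ≠ 0 := by simpa using hη.ne'
  obtain ⟨t, hZt, htdiam, htsum⟩ : ∃ t : ℕ → Set X, Z ⊆ ⋃ i, t i ∧
      (∀ i, ediam (t i) ≤ ENNReal.ofReal (ρ₀ / 2)) ∧
      ∑' i, ⨆ _ : (t i).Nonempty, ediam (t i) ^ d < η / 2 := by
    rw [Measure.hausdorffMeasure_apply] at hZ
    have hcover := (le_iSup₂ _ (ENNReal.ofReal_pos.mpr (half_pos hρ₀))).trans_lt
      (hZ.trans_lt (pos_iff_ne_zero.mpr hη'))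
    simpa only [iInf_lt_iff, exists_prop] using hcover
  obtain ⟨θ, hθ, hθsum⟩ := ENNReal.exists_pos_sum_of_countable hη' ℕ
  choose U hUopen htU hνU using fun i ↦ exists_isOpen_superset_measure_le_ediam_rpow A d
    ((htdiam i).trans_lt ((ENNReal.ofReal_lt_ofReal_iff hρ₀).mpr (half_lt_self hρ₀)))
    (ENNReal.coe_ne_zero.mpr (hθ i).ne')
  refine ⟨⋃ i, U i, isOpen_iUnion hUopen, hZt.trans (iUnion_mono htU), fun ν hν ↦ ?_⟩
  calc ν (⋃ i, U i) ≤ ∑' i, ν (U i) := measure_iUnion_le U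
    _ ≤ ∑' i, A * ((⨆ _ : (t i).Nonempty, ediam (t i) ^ d) + θ i) :=
        ENNReal.tsum_le_tsum fun i ↦ hνU i ν hν
    _ = A * (∑' i, (⨆ _ : (t i).Nonempty, ediam (t i) ^ d) + ∑' i, (θ i : ℝ≥0∞)) := by
        rw [ENNReal.tsum_mul_left, ENNReal.tsum_add]
    _ ≤ A * (η / 2 + η / 2) := by gcongr
    _ ≤ ε := by rw [ENNReal.add_halves, mul_comm]; exact hAη.le

theorem exists_norm_ge_mem_frostmanLarge (hρ₀ : 0 < ρ₀) (hA : A ≠ ∞) {K : Set X}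
    (hK : IsCompact K) {E : Type*} [NormedAddCommGroup E] {f : X → E} (hf : ContinuousOn f K)
    (hzeros : μH[d] {x ∈ K | f x = 0} = 0) :
    ∃ m > 0, {x : K | m ≤ ‖f x‖} ∈ frostmanLarge d A ρ₀ K := by
  obtain ⟨U, hU, hzerosU, hνU⟩ := exists_isOpen_superset_measure_le_of_hausdorffMeasure_eq_zero
    hρ₀ hA hzeros (ENNReal.inv_ne_zero.mpr ENNReal.ofNat_ne_top : (2⁻¹ : ℝ≥0∞) ≠ 0)
  obtain ⟨m, hm, hmf⟩ := (hK.diff hU).exists_forall_le' (hf.mono sdiff_subset).norm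
    (a := 0) fun x hx ↦ norm_pos_iff.mpr fun hfx ↦ hx.2 (hzerosU ⟨hx.1, hfx⟩)
  refine ⟨m, hm, fun ν hν hνK ↦ ?_⟩
  calc (2⁻¹ : ℝ≥0∞) = ν K - 2⁻¹ := by rw [hνK, ENNReal.one_sub_inv_two]
    _ ≤ ν K - ν U := tsub_le_tsub_left (hνU ν hν) _
    _ ≤ ν (K \ U) := le_measure_sdiff
    _ ≤ ν (Subtype.val '' {x : K | m ≤ ‖f x‖}) :=
        measure_mono fun x hx ↦ ⟨⟨x, hx.1⟩, hmf x hx, rfl⟩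

end HausdorffNull

section Compactness

variable {K : Type*} [TopologicalSpace K] [CompactSpace K] {𝓐 : Set (Set K)}

theorem exists_pos_forall_mem_of_isCompact {E : Type*} [NormedAddCommGroup E]
    (h𝓐 : IsUpperSet 𝓐) {F : Set C(K, E)} (hF : IsCompact F)
    (hmem : ∀ f ∈ F, ∃ m > 0, {x | m ≤ ‖f x‖} ∈ 𝓐) :
    ∃ δ > 0, ∀ f ∈ F, {x | δ ≤ ‖f x‖} ∈ 𝓐 := by
  refine hF.induction_on (p := fun s ↦ ∃ δ > 0, ∀ f ∈ s, {x | δ ≤ ‖f x‖} ∈ 𝓐)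
    ⟨1, one_pos, by simp⟩
    (fun s t hst ⟨δ, hδ, ht⟩ ↦ ⟨δ, hδ, fun f hf ↦ ht f (hst hf)⟩) ?_ fun f hf ↦ ?_
  · rintro s t ⟨δ, hδ, hs⟩ ⟨δ', hδ', ht⟩
    refine ⟨min δ δ', lt_min hδ hδ', fun f hf ↦ hf.elim (fun h ↦ h𝓐 ?_ (hs f h)) fun h ↦
      h𝓐 ?_ (ht f h)⟩
    · exact ofPred_subset_ofPred.mpr fun x ↦ (min_le_left _ _).trans
    · exact ofPred_subset_ofPred.mpr fun x ↦ (min_le_right _ _).trans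
  · obtain ⟨m, hm, hmf⟩ := hmem f hf
    refine ⟨ball f (m / 2), mem_nhdsWithin_of_mem_nhds (ball_mem_nhds f (half_pos hm)), m / 2,
      half_pos hm, fun g hg ↦ h𝓐 (fun x hx ↦ ?_) hmf⟩
    have hgf : ‖f x - g x‖ < m / 2 := by
      rw [← dist_eq_norm, dist_comm]
      exact (g.dist_apply_le_dist x).trans_lt hg
    have hfg := norm_sub_norm_le (f x) (g x)
    simp only [mem_ofPred_eq] at hx ⊢
    linarith

theorem exists_pos_forall_mul_norm_mem_of_finiteDimensional {E : Type*} [NormedAddCommGroup E]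
    [NormedSpace ℝ E] (h𝓐 : IsUpperSet 𝓐) (V : Submodule ℝ C(K, E)) [FiniteDimensional ℝ V]
    (hmem : ∀ f ∈ V, f ≠ 0 → ∃ m > 0, {x | m ≤ ‖f x‖} ∈ 𝓐) :
    ∃ δ > 0, ∀ f ∈ V, f ≠ 0 → {x | δ * ‖f‖ ≤ ‖f x‖} ∈ 𝓐 := by
  have : ProperSpace V := FiniteDimensional.proper ℝ V
  obtain ⟨δ, hδ, hsphere⟩ := exists_pos_forall_mem_of_isCompact h𝓐
    ((isCompact_sphere (0 : V) 1).image continuous_subtype_val) (by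
      rintro _ ⟨f, hf, rfl⟩
      exact hmem f f.2 fun h ↦ by simp [show f = 0 from Subtype.ext h] at hf)
  refine ⟨δ, hδ, fun f hfV hf ↦ h𝓐 (fun x hx ↦ ?_) (hsphere (‖f‖⁻¹ • f)
    ⟨⟨_, V.smul_mem _ hfV⟩, ?_, rfl⟩)⟩
  · rw [mem_ofPred_eq, ContinuousMap.smul_apply, norm_smul, norm_inv, norm_norm, ← div_eq_inv_mul,
      le_div_iff₀ (norm_pos_iff.mpr hf)] at hx
    exact hx
  · rw [mem_sphere_zero_iff_norm, Submodule.coe_norm]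
    exact norm_smul_inv_norm (𝕜 := ℝ) hf

end Compactness

section Remez

variable {σ : Type*} [Fintype σ] {d ρ₀ : ℝ} {A : ℝ≥0∞} {K : Set (σ → ℝ)}

/-- The restriction of real polynomials to a set `K`, as a linear map into the continuous functions
on `K`, which carry the supremum norm when `K` is compact. -/
noncomputable def evalOn (K : Set (σ → ℝ)) : MvPolynomial σ ℝ →ₗ[ℝ] C(K, ℝ) where
  toFun p := ⟨fun x ↦ p.eval (x : σ → ℝ),
    (MvPolynomial.continuous_eval p).comp continuous_subtype_val⟩
  map_add' p q := by ext; simp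
  map_smul' a p := by ext; simp

theorem exists_remez_of_frostmanGrowth (hd : (Fintype.card σ : ℝ) - 1 < d) (hρ₀ : 0 < ρ₀)
    (hA : A ≠ ∞) (hK : IsCompact K) (k : ℕ) :
    ∃ δ > 0, ∀ p : MvPolynomial σ ℝ, p.totalDegree ≤ k → ∀ ν : Measure (σ → ℝ),
      FrostmanGrowth d A ρ₀ ν → ν K = 1 → ∀ x ∈ K,
        2⁻¹ ≤ ν {y ∈ K | δ * ‖p.eval x‖ ≤ ‖p.eval y‖} := by
  have : CompactSpace K := isCompact_iff_compactSpace.mp hK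
  obtain ⟨δ, hδ, hlarge⟩ := exists_pos_forall_mul_norm_mem_of_finiteDimensional
    (isUpperSet_frostmanLarge (d := d) (A := A) (ρ₀ := ρ₀) (K := K))
    ((MvPolynomial.restrictTotalDegree σ ℝ k).map (evalOn K)) (by
      rintro _ ⟨p, -, rfl⟩ hp
      have hp₀ : p ≠ 0 := ne_of_apply_ne (evalOn K) (hp.trans_eq (map_zero _).symm)
      exact exists_norm_ge_mem_frostmanLarge hρ₀ hA hK
        (MvPolynomial.continuous_eval p).continuousOn
        (measure_mono_null (fun x hx ↦ hx.2) (hausdorffMeasure_zeros_eq_zero hd hp₀)))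
  refine ⟨δ, hδ, fun p hp ν hν hνK x hx ↦ ?_⟩
  have hpx : ‖p.eval x‖ ≤ ‖evalOn K p‖ := (evalOn K p).norm_coe_le_norm ⟨x, hx⟩
  rcases eq_or_ne (evalOn K p) 0 with h₀ | h₀
  · have hpx₀ : ‖p.eval x‖ = 0 := by
      simpa [h₀] using hpx
    simp [hpx₀, hνK]
  · refine (hlarge _ ⟨p, (MvPolynomial.mem_restrictTotalDegree _ _ _).mpr hp, rfl⟩ h₀ ν hν
      hνK).trans (measure_mono ?_)
    rintro _ ⟨y, hy, rfl⟩
    exact ⟨y.2, (mul_le_mul_of_nonneg_left hpx hδ.le).trans hy⟩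

theorem mul_measure_rpow_le_eLpNorm {α ε : Type*} [MeasurableSpace α] [ENorm ε] {μ : Measure α}
    {f : α → ε} {c p : ℝ≥0∞} {s : Set α} (hs : MeasurableSet s) (hμs : μ s ≠ 0) (hp : p ≠ 0)
    (hf : ∀ x ∈ s, c ≤ ‖f x‖ₑ) : c * μ s ^ (1 / p.toReal) ≤ eLpNorm f p μ := by
  calc c * μ s ^ (1 / p.toReal) = eLpNorm (s.indicator fun _ ↦ c) p μ := by
        rw [eLpNorm_indicator_const' hs hμs hp, enorm_eq_self]
    _ ≤ eLpNorm f p μ := by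
        refine eLpNorm_mono_enorm fun x ↦ ?_
        rw [enorm_eq_self]
        exact indicator_le (fun x hx ↦ hf x hx) x

theorem exists_enorm_eval_le_mul_eLpNorm_of_frostmanGrowth (hd : (Fintype.card σ : ℝ) - 1 < d)
    (hρ₀ : 0 < ρ₀) (hA : A ≠ ∞) (hK : IsCompact K) (k : ℕ) {u : ℝ≥0∞} (hu : u ≠ 0) :
    ∃ C : ℝ≥0∞, C ≠ ∞ ∧ ∀ p : MvPolynomial σ ℝ, p.totalDegree ≤ k → ∀ ν : Measure (σ → ℝ),
      FrostmanGrowth d A ρ₀ ν → ν K = 1 → ∀ x ∈ K,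
        ‖p.eval x‖ₑ ≤ C * eLpNorm (fun y ↦ p.eval y) u ν := by
  obtain ⟨δ, hδ, hremez⟩ := exists_remez_of_frostmanGrowth hd hρ₀ hA hK k
  set b : ℝ≥0∞ := ENNReal.ofReal δ * 2⁻¹ ^ (1 / u.toReal)
  have hb₀ : b ≠ 0 := mul_ne_zero (ENNReal.ofReal_pos.mpr hδ).ne'
    (ENNReal.rpow_pos (by simp) (by simp)).ne'
  have hb : b ≠ ∞ := by finiteness
  refine ⟨b⁻¹, ENNReal.inv_ne_top.mpr hb₀, fun p hp ν hν hνK x hx ↦ ?_⟩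
  have hmeas : MeasurableSet {y ∈ K | δ * ‖p.eval x‖ ≤ ‖p.eval y‖} :=
    hK.measurableSet.inter (isClosed_le continuous_const
      (MvPolynomial.continuous_eval p).norm).measurableSet
  have hlarge := hremez p hp ν hν hνK x hx
  have hpointwise : ∀ y ∈ {y ∈ K | δ * ‖p.eval x‖ ≤ ‖p.eval y‖},
      ENNReal.ofReal δ * ‖p.eval x‖ₑ ≤ ‖p.eval y‖ₑ := fun y hy ↦ by
    rw [← ofReal_norm, ← ofReal_norm, ← ENNReal.ofReal_mul hδ.le]
    exact ENNReal.ofReal_le_ofReal hy.2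
  rw [← ENNReal.mul_le_iff_le_inv hb₀ hb]
  calc b * ‖p.eval x‖ₑ = ENNReal.ofReal δ * ‖p.eval x‖ₑ * 2⁻¹ ^ (1 / u.toReal) :=
        mul_right_comm _ _ _
    _ ≤ ENNReal.ofReal δ * ‖p.eval x‖ₑ *
          ν {y ∈ K | δ * ‖p.eval x‖ ≤ ‖p.eval y‖} ^ (1 / u.toReal) := by gcongr
    _ ≤ eLpNorm (fun y ↦ p.eval y) u ν := mul_measure_rpow_le_eLpNorm hmeas
        (ne_bot_of_le_ne_bot (by simp) hlarge) hu hpointwise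

end Remez

section AhlforsRegular

/-- Ahlfors `d`-regularity of `S` for `μ`, at scales up to `1` and with both constants explicit:
the `μ`-measure of `S` in a ball of radius `ρ` centered in `S` is comparable to `ρ ^ d`. -/
def IsAhlforsRegular {X : Type*} [PseudoMetricSpace X] [MeasurableSpace X] (μ : Measure X)
    (S : Set X) (d : ℝ) (c₁ c₂ : ℝ≥0∞) : Prop :=
  ∀ w ∈ S, ∀ ρ : ℝ, 0 < ρ → ρ ≤ 1 →
    c₁ * ENNReal.ofReal ρ ^ d ≤ μ (closedBall w ρ ∩ S) ∧
      μ (closedBall w ρ ∩ S) ≤ c₂ * ENNReal.ofReal ρ ^ d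

namespace IsAhlforsRegular

variable {X : Type*} [PseudoMetricSpace X] [MeasurableSpace X] {μ : Measure X} {S : Set X}
  {d r₀ ρ : ℝ} {c₁ c₂ : ℝ≥0∞} {w : X}

-- A ball meeting `S` lies in a ball of twice the radius centered in `S`.
theorem measure_closedBall_inter_le (h : IsAhlforsRegular μ S d c₁ c₂) (x : X) (hρ : 0 < ρ)
    (hρ₁ : 2 * ρ ≤ 1) : μ (closedBall x ρ ∩ S) ≤ c₂ * ENNReal.ofReal (2 * ρ) ^ d := by
  obtain hempty | ⟨z, hzx, hzS⟩ := (closedBall x ρ ∩ S).eq_empty_or_nonempty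
  · simp [hempty]
  · have hsub : closedBall x ρ ⊆ closedBall z (2 * ρ) :=
      closedBall_subset_closedBall' (by rw [mem_closedBall, dist_comm] at hzx; linarith)
    exact (measure_mono (inter_subset_inter_left S hsub)).trans
      (h z hzS (2 * ρ) (by positivity) hρ₁).2

theorem measure_closedBall_inter_ne_top [OpensMeasurableSpace X] [ProperSpace X]
    (h : IsAhlforsRegular μ S d c₁ c₂) (hc₂ : c₂ ≠ ∞) (x : X) (r : ℝ) :
    μ (closedBall x r ∩ S) ≠ ∞ := by
  rw [← Measure.restrict_apply measurableSet_closedBall]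
  refine ((isCompact_closedBall x r).measure_lt_top_of_nhdsWithin fun y _ ↦ ?_).ne
  refine ⟨closedBall y (1 / 2),
    mem_nhdsWithin_of_mem_nhds (closedBall_mem_nhds y one_half_pos), ?_⟩
  rw [Measure.restrict_apply measurableSet_closedBall]
  refine (h.measure_closedBall_inter_le y (by norm_num) (by norm_num)).trans_lt ?_
  simpa using hc₂.lt_top

theorem le_measure_closedBall_inter (h : IsAhlforsRegular μ S d c₁ c₂) (hw : w ∈ S)
    (hρ : 0 < ρ) (hρ₁ : ρ ≤ 1) (hρr₀ : ρ ≤ r₀) :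
    c₁ * ENNReal.ofReal ρ ^ d ≤ μ (closedBall w r₀ ∩ S) :=
  (h w hw ρ hρ hρ₁).1.trans
    (measure_mono (inter_subset_inter_left S (closedBall_subset_closedBall hρr₀)))

theorem measure_closedBall_inter_ne_zero (h : IsAhlforsRegular μ S d c₁ c₂) (hc₁ : c₁ ≠ 0)
    (hw : w ∈ S) (hr₀ : 0 < r₀) : μ (closedBall w r₀ ∩ S) ≠ 0 := by
  have hmin : 0 < min r₀ 1 := lt_min hr₀ one_pos
  have hpos : 0 < ENNReal.ofReal (min r₀ 1) ^ d :=
    ENNReal.rpow_pos (ENNReal.ofReal_pos.mpr hmin) ENNReal.ofReal_ne_top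
  exact ne_bot_of_le_ne_bot (mul_ne_zero hc₁ hpos.ne')
    (h.le_measure_closedBall_inter hw hmin (min_le_right _ _) (min_le_left _ _))

theorem cond_closedBall_le [OpensMeasurableSpace X] (h : IsAhlforsRegular μ S d c₁ c₂)
    {δ : ℝ} (hδ : 0 < δ) (hδ₁ : δ ≤ 1) (hr₀ : 0 < r₀)
    (hr₀δ : 2 * r₀ * δ ≤ 1) (hw : w ∈ S) (x : X) (hρ : 0 < ρ) (hρδ : ρ ≤ δ) :
    μ[closedBall x (r₀ * ρ) | closedBall w r₀ ∩ S] ≤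
      c₂ / c₁ * ENNReal.ofReal (2 / δ) ^ d * ENNReal.ofReal ρ ^ d := by
  have hlower : c₁ * ENNReal.ofReal (r₀ * δ) ^ d ≤ μ (closedBall w r₀ ∩ S) :=
    h.le_measure_closedBall_inter hw (by positivity) (by nlinarith [mul_pos hr₀ hδ])
      (mul_le_of_le_one_right hr₀.le hδ₁)
  have hupper : μ (closedBall w r₀ ∩ S ∩ closedBall x (r₀ * ρ)) ≤
      c₂ * ENNReal.ofReal (2 * (r₀ * ρ)) ^ d :=
    (measure_mono (subset_inter inter_subset_right (inter_subset_left.trans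
      inter_subset_right))).trans
      (h.measure_closedBall_inter_le x (by positivity)
        (by nlinarith [mul_le_mul_of_nonneg_left hρδ hr₀.le]))
  have hscale : ENNReal.ofReal (2 * (r₀ * ρ)) ^ d =
      ENNReal.ofReal (2 / δ) ^ d * ENNReal.ofReal ρ ^ d * ENNReal.ofReal (r₀ * δ) ^ d := by
    rw [← ENNReal.mul_rpow_of_ne_top (by finiteness) (by finiteness),
      ← ENNReal.mul_rpow_of_ne_top (by finiteness) (by finiteness),
      ← ENNReal.ofReal_mul (by positivity), ← ENNReal.ofReal_mul (by positivity)]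
    congr 2
    field_simp
  have hr₀δpos : 0 < ENNReal.ofReal (r₀ * δ) := ENNReal.ofReal_pos.mpr (by positivity)
  have hpos : 0 < ENNReal.ofReal (r₀ * δ) ^ d := ENNReal.rpow_pos hr₀δpos ENNReal.ofReal_ne_top
  have htop : ENNReal.ofReal (r₀ * δ) ^ d ≠ ∞ :=
    ENNReal.rpow_ne_top_of_ne_zero hr₀δpos.ne' ENNReal.ofReal_ne_top
  calc μ[closedBall x (r₀ * ρ) | closedBall w r₀ ∩ S]
      = (μ (closedBall w r₀ ∩ S))⁻¹ * μ (closedBall w r₀ ∩ S ∩ closedBall x (r₀ * ρ)) :=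
        cond_apply' measurableSet_closedBall μ
    _ ≤ (c₁ * ENNReal.ofReal (r₀ * δ) ^ d)⁻¹ * (c₂ * ENNReal.ofReal (2 * (r₀ * ρ)) ^ d) := by
        gcongr
    _ = c₂ / c₁ * ENNReal.ofReal (2 / δ) ^ d * ENNReal.ofReal ρ ^ d := by
        rw [hscale, ← ENNReal.div_eq_inv_mul, ← mul_assoc c₂,
          ENNReal.mul_div_mul_right _ _ hpos.ne' htop, ENNReal.mul_div_right_comm, mul_assoc]

end IsAhlforsRegular

end AhlforsRegular

section Rescaling

variable {E : Type*} [NormedAddCommGroup E] [NormedSpace ℝ E] {r : ℝ}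

theorem preimage_inv_smul_sub_closedBall (hr : 0 < r) (w x : E) (ρ : ℝ) :
    (fun y ↦ r⁻¹ • (y - w)) ⁻¹' closedBall x ρ = closedBall (w + r • x) (r * ρ) := by
  ext y
  have hdist : dist y (w + r • x) = r * dist (r⁻¹ • (y - w)) x := by
    rw [← abs_of_pos hr, ← Real.norm_eq_abs, ← dist_smul₀, Real.norm_eq_abs, abs_of_pos hr,
      smul_inv_smul₀ hr.ne', dist_eq_norm, dist_eq_norm, sub_sub]
  rw [mem_preimage, mem_closedBall, mem_closedBall, hdist, mul_le_mul_iff_right₀ hr]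

variable [MeasurableSpace E] [BorelSpace E] {μ : Measure E} {S : Set E} {d : ℝ} {c₁ c₂ : ℝ≥0∞}
  {w : E} {δ r₀ : ℝ}

theorem IsAhlforsRegular.frostmanGrowth_map_cond (h : IsAhlforsRegular μ S d c₁ c₂) (hδ : 0 < δ)
    (hδ₁ : δ ≤ 1) (hr₀ : 0 < r₀) (hr₀δ : 2 * r₀ * δ ≤ 1) (hw : w ∈ S) :
    FrostmanGrowth d (c₂ / c₁ * ENNReal.ofReal (2 / δ) ^ d) δ
      ((μ[|closedBall w r₀ ∩ S]).map fun y ↦ r₀⁻¹ • (y - w)) := by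
  intro x ρ hρ hρδ
  rw [Measure.map_apply (by fun_prop) measurableSet_closedBall,
    preimage_inv_smul_sub_closedBall hr₀]
  exact h.cond_closedBall_le hδ hδ₁ hr₀ hr₀δ hw _ hρ hρδ

theorem IsAhlforsRegular.map_cond_closedBall_eq_one [ProperSpace E]
    (h : IsAhlforsRegular μ S d c₁ c₂) (hc₁ : c₁ ≠ 0) (hc₂ : c₂ ≠ ∞) (hr₀ : 0 < r₀) (hw : w ∈ S) :
    (μ[|closedBall w r₀ ∩ S]).map (fun y ↦ r₀⁻¹ • (y - w)) (closedBall 0 1) = 1 := by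
  rw [Measure.map_apply (by fun_prop) measurableSet_closedBall,
    preimage_inv_smul_sub_closedBall hr₀, smul_zero, add_zero, mul_one,
    cond_apply' measurableSet_closedBall, inter_right_comm, inter_self]
  exact ENNReal.inv_mul_cancel (h.measure_closedBall_inter_ne_zero hc₁ hw hr₀)
    (h.measure_closedBall_inter_ne_top hc₂ w r₀)

end Rescaling

section Substitution

open MvPolynomial

theorem totalDegree_bind₁_le {σ τ R : Type*} [CommSemiring R] {f : σ → MvPolynomial τ R} {m : ℕ}
    (hf : ∀ i, (f i).totalDegree ≤ m) (p : MvPolynomial σ R) :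
    (bind₁ f p).totalDegree ≤ m * p.totalDegree := by
  rw [← aeval_eq_bind₁, aeval_def, eval₂_eq]
  refine totalDegree_finsetSum_le fun a ha ↦ ?_
  calc (algebraMap R (MvPolynomial τ R) (coeff a p) * ∏ i ∈ a.support, f i ^ a i).totalDegree
      ≤ (∏ i ∈ a.support, f i ^ a i).totalDegree := by
        rw [algebraMap_eq, ← smul_eq_C_mul]
        exact totalDegree_smul_le _ _
    _ ≤ ∑ i ∈ a.support, a i * (f i).totalDegree :=
        (totalDegree_finsetProd _ _).trans (Finset.sum_le_sum fun i _ ↦ totalDegree_pow _ _)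
    _ ≤ ∑ i ∈ a.support, a i * m :=
        Finset.sum_le_sum fun i _ ↦ Nat.mul_le_mul_left _ (hf i)
    _ = m * a.sum fun _ e ↦ e := by rw [← Finset.sum_mul, mul_comm]; rfl
    _ ≤ m * p.totalDegree := Nat.mul_le_mul_left _ (le_totalDegree ha)

theorem exists_totalDegree_le_eval_eq_eval_add_smul {σ R : Type*} [CommSemiring R]
    (p : MvPolynomial σ R) (w : σ → R) (s : R) :
    ∃ q : MvPolynomial σ R, q.totalDegree ≤ p.totalDegree ∧ ∀ x, q.eval x = p.eval (w + s • x) := by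
  refine ⟨bind₁ (fun i ↦ C (w i) + s • X i) p, ?_, fun x ↦ ?_⟩
  · refine (totalDegree_bind₁_le (m := 1) (fun i ↦ ?_) p).trans_eq (one_mul _)
    refine (totalDegree_add _ _).trans (max_le (by simp) ((totalDegree_smul_le _ _).trans ?_))
    exact (totalDegree_monomial_le _ _).trans_eq (Finsupp.sum_single_index rfl)
  · refine (eval₂Hom_bind₁ _ x _ p).trans
      (congrArg (fun g ↦ eval₂Hom (RingHom.id R) g p) (funext fun i ↦ ?_))
    change eval x (C (w i) + s • X i) = w i + s * x i
    rw [map_add, eval_C, smul_eval, eval_X]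

end Substitution

theorem eLpNorm_cond_le_of_forall_mem_enorm_le {α ε : Type*} [MeasurableSpace α]
    [TopologicalSpace ε] [ESeminormedAddMonoid ε] {μ : Measure α} {f : α → ε} {s : Set α}
    (hs : MeasurableSet s) {B : ℝ≥0∞} (hf : ∀ x ∈ s, ‖f x‖ₑ ≤ B) (p : ℝ≥0∞) :
    eLpNorm f p μ[|s] ≤ B := by
  refine (eLpNorm_le_of_ae_enorm_bound ((ae_cond_mem hs).mono hf)).trans ?_
  exact mul_le_of_le_one_right' (ENNReal.rpow_le_one prob_le_one (by positivity))

theorem stmt_13_general (n : ℕ) (d : ℝ) (hd1 : (n : ℝ) - 1 < d) (S : Set (Fin n → ℝ))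
    (c₁ c₂ : ℝ≥0∞) (hc₁ : 0 < c₁) (hc₂ : c₂ ≠ ∞) (hreg : IsAhlforsRegular μH[d] S d c₁ c₂)
    (R : ℝ) (hR : 0 < R) (k : ℕ) (u : ℝ≥0∞) (hu : u ≠ 0) :
    ∃ C : ℝ≥0∞, C ≠ ∞ ∧
      ∀ (w : Fin n → ℝ) (r₀ : ℝ), w ∈ S → 0 < r₀ → 2 * r₀ ≤ R →
        ∀ P ∈ degLE n k, ∀ y ∈ closedBall w r₀,
          ‖P y‖ₑ ≤ C * eLpNorm P u (μH[d][|closedBall w r₀ ∩ S]) := by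
  set δ := (1 + R)⁻¹
  have hδ : 0 < δ := by positivity
  have hδ₁ : δ ≤ 1 := inv_le_one_of_one_le₀ (by linarith)
  have hRδ : R * δ ≤ 1 := (div_le_one₀ (by positivity)).mpr (by linarith)
  have hA : c₂ / c₁ * ENNReal.ofReal (2 / δ) ^ d ≠ ∞ :=
    ENNReal.mul_ne_top (ENNReal.div_ne_top hc₂ hc₁.ne') (ENNReal.rpow_ne_top_of_ne_zero
      (ENNReal.ofReal_pos.mpr (by positivity)).ne' ENNReal.ofReal_ne_top)
  obtain ⟨C, hC, hsup⟩ := exists_enorm_eval_le_mul_eLpNorm_of_frostmanGrowth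
    (σ := Fin n) (by rwa [Fintype.card_fin]) hδ hA (isCompact_closedBall 0 1) k hu
  refine ⟨C, hC, fun w r₀ hw hr₀ hr₀R P ⟨p, hpk, hPp⟩ y hy ↦ ?_⟩
  obtain rfl : P = fun x ↦ p.eval x := funext hPp
  obtain ⟨q, hqp, hq⟩ := exists_totalDegree_le_eval_eq_eval_add_smul p w r₀
  have hr₀δ : 2 * r₀ * δ ≤ 1 := (mul_le_mul_of_nonneg_right hr₀R hδ.le).trans hRδ
  have hqp_comp (z : Fin n → ℝ) : q.eval (r₀⁻¹ • (z - w)) = p.eval z := by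
    rw [hq, smul_inv_smul₀ hr₀.ne', add_sub_cancel]
  have hy' : r₀⁻¹ • (y - w) ∈ closedBall (0 : Fin n → ℝ) 1 := by
    rw [← mem_preimage (f := fun y ↦ r₀⁻¹ • (y - w)), preimage_inv_smul_sub_closedBall hr₀]
    simpa using hy
  have hbound := hsup q (hqp.trans hpk) _ (hreg.frostmanGrowth_map_cond hδ hδ₁ hr₀ hr₀δ hw)
    (hreg.map_cond_closedBall_eq_one hc₁.ne' hc₂ hr₀ hw) _ hy'
  rw [eLpNorm_map_measure (MvPolynomial.continuous_eval q).aestronglyMeasurable (by fun_prop)]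
    at hbound
  simpa only [Function.comp_def, hqp_comp] using hbound

/-- Reverse Hölder inequality for polynomials on `Q ∩ S`, for a `d`-set `S` with
`n - 1 < d ≤ n` and a cube `Q` centered in `S` with side length `0 < ℓ(Q) ≤ R`:
for every polynomial `p` of degree `≤ k` and all `1 ≤ u, r ≤ ∞`, the normalized `L^r` mean of
`p` over `Q ∩ S` (w.r.t. `H^d`) is bounded by `C(S,R,n,u,r,k)` times the normalized `L^u`
mean of `p` over `Q ∩ S`. -/
theorem stmt_13 (n : ℕ) (d : ℝ) (hd1 : (n : ℝ) - 1 < d) (hdn : d ≤ n)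
    (S : Set (Fin n → ℝ)) (hScl : IsClosed S)
    (c₁ c₂ : ℝ≥0∞) (hc₁ : 0 < c₁) (hc₂ : c₂ ≠ ∞)
    (hreg : ∀ w ∈ S, ∀ ρ : ℝ, 0 < ρ → ρ ≤ 1 →
      c₁ * ENNReal.ofReal ρ ^ d ≤ μH[d] (closedBall w ρ ∩ S) ∧
        μH[d] (closedBall w ρ ∩ S) ≤ c₂ * ENNReal.ofReal ρ ^ d)
    (R : ℝ) (hR : 0 < R) (k : ℕ) (u r : ℝ≥0∞) (hu : 1 ≤ u) (hr : 1 ≤ r) :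
    ∃ C : ℝ≥0∞, C ≠ ∞ ∧
      ∀ (w : Fin n → ℝ) (r₀ : ℝ), w ∈ S → 0 < r₀ → 2 * r₀ ≤ R →
        ∀ P ∈ degLE n k,
          eLpNorm P r ((μH[d] (closedBall w r₀ ∩ S))⁻¹ •
              μH[d].restrict (closedBall w r₀ ∩ S))
            ≤ C * eLpNorm P u ((μH[d] (closedBall w r₀ ∩ S))⁻¹ •
                μH[d].restrict (closedBall w r₀ ∩ S)) := by
  obtain ⟨C, hC, hsup⟩ := stmt_13_general n d hd1 S c₁ c₂ hc₁ hc₂ hreg R hR k u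
    (one_pos.trans_le hu).ne'
  exact ⟨C, hC, fun w r₀ hw hr₀ hr₀R P hP ↦ eLpNorm_cond_le_of_forall_mem_enorm_le
    (isClosed_closedBall.inter hScl).measurableSet
    (fun y hy ↦ hsup w r₀ hw hr₀ hr₀R P hP y hy.1) r⟩
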